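/- Existence of monotone cutoffs with smooth square root of −χχ': For all real numbers 0 ≤ a < b there exist infinitely differentiable functions χ, β: ℝ → ℝ such that: (i) 0 ≤ χ ≤ 1; (ii) χ(x) = 1 for x ≤ a and χ(x) = 0 for x ≥ b; (iii) χ'(x) ≤ 0 for all x; (iv) β ≥ 0 and β(x)² = −χ(x)·χ'(x) for all x ∈ ℝ. -/

import Mathlib

/-!
Let `e` be the flat function `expNegInvGlue`, equal to `exp (-1/x)` for `x > 0`, and let
`s x = e x / (e x + e (1 - x))` be `Real.smoothTransition`. Although the square root of a smooth
nonnegative function need not be smooth, `√e` is, because halving the exponent is a dilation: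
`√(e x) = e (2 * x)`. Hence `√s` is smooth. Factoring `e' x = x⁻² * e x` and `e' (1 - x)` out of
the quotient rule leaves only a positive factor,
`s' x = e' x * e' (1 - x) * (x² + (1 - x)²) / (e x + e (1 - x))²`,
so `√s'` is smooth as well. The cutoff is `χ x = s ((b - x) / (b - a))`, and `β = √χ * √(-χ')`.
-/

open Real

theorem sqrt_expNegInvGlue (x : ℝ) : √(expNegInvGlue x) = expNegInvGlue (2 * x) := by
  rcases le_or_gt x 0 with hx | hx
  · simp [expNegInvGlue.zero_of_nonpos, hx, mul_nonpos_of_nonneg_of_nonpos]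
  · rw [expNegInvGlue, expNegInvGlue, if_neg hx.not_ge, if_neg (by linarith), ← exp_half]
    congr 1
    field_simp

theorem contDiff_sqrt_expNegInvGlue {n : ℕ∞} : ContDiff ℝ n fun x => √(expNegInvGlue x) := by
  simp only [sqrt_expNegInvGlue]
  fun_prop

theorem hasDerivAt_expNegInvGlue (x : ℝ) :
    HasDerivAt expNegInvGlue (x⁻¹ ^ 2 * expNegInvGlue x) x := by
  simpa using expNegInvGlue.hasDerivAt_polynomial_eval_inv_mul 1 x

theorem deriv_expNegInvGlue (x : ℝ) : deriv expNegInvGlue x = x⁻¹ ^ 2 * expNegInvGlue x :=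
  (hasDerivAt_expNegInvGlue x).deriv

theorem deriv_expNegInvGlue_nonneg (x : ℝ) : 0 ≤ deriv expNegInvGlue x :=
  expNegInvGlue.monotone.deriv_nonneg

theorem expNegInvGlue_eq_sq_mul_deriv (x : ℝ) :
    expNegInvGlue x = x ^ 2 * deriv expNegInvGlue x := by
  rw [deriv_expNegInvGlue]
  rcases eq_or_ne x 0 with rfl | hx
  · simp
  · field_simp

theorem sqrt_deriv_expNegInvGlue (x : ℝ) :
    √(deriv expNegInvGlue x) = x⁻¹ * expNegInvGlue (2 * x) := by
  rw [deriv_expNegInvGlue]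
  rcases le_or_gt x 0 with hx | hx
  · simp [expNegInvGlue.zero_of_nonpos, hx, mul_nonpos_of_nonneg_of_nonpos]
  · rw [sqrt_mul (sq_nonneg _), sqrt_sq (inv_nonneg.2 hx.le), sqrt_expNegInvGlue]

theorem contDiff_sqrt_deriv_expNegInvGlue {n : ℕ∞} :
    ContDiff ℝ n fun x => √(deriv expNegInvGlue x) := by
  have hinv : ContDiff ℝ n fun x : ℝ => x⁻¹ * expNegInvGlue x := by
    simpa using expNegInvGlue.contDiff_polynomial_eval_inv_mul Polynomial.X
  have hsqrt (x : ℝ) : √(deriv expNegInvGlue x) = 2 * ((2 * x)⁻¹ * expNegInvGlue (2 * x)) := by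
    rw [sqrt_deriv_expNegInvGlue, mul_inv]
    ring
  simp only [hsqrt]
  exact contDiff_const.mul (hinv.comp (contDiff_const.mul contDiff_id))

theorem contDiff_sqrt_smoothTransition {n : ℕ∞} :
    ContDiff ℝ n fun x => √(smoothTransition x) := by
  have hden (x : ℝ) := smoothTransition.pos_denom x
  simp only [smoothTransition, sqrt_div (expNegInvGlue.nonneg _)]
  refine contDiff_sqrt_expNegInvGlue.div (ContDiff.sqrt (by fun_prop) fun x => (hden x).ne') ?_
  exact fun x => (sqrt_pos.2 (hden x)).ne'

theorem deriv_smoothTransition (x : ℝ) :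
    deriv smoothTransition x =
      deriv expNegInvGlue x * deriv expNegInvGlue (1 - x) * (x ^ 2 + (1 - x) ^ 2) /
        (expNegInvGlue x + expNegInvGlue (1 - x)) ^ 2 := by
  have hdiff (y : ℝ) : HasDerivAt expNegInvGlue (deriv expNegInvGlue y) y :=
    (hasDerivAt_expNegInvGlue y).differentiableAt.hasDerivAt
  have hrefl : HasDerivAt (fun y => expNegInvGlue (1 - y)) (-deriv expNegInvGlue (1 - x)) x :=
    (hdiff (1 - x)).comp_const_sub 1 x
  have hquot : HasDerivAt smoothTransition _ x :=
    (hdiff x).fun_div ((hdiff x).fun_add hrefl) (smoothTransition.pos_denom x).ne'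
  rw [hquot.deriv]
  congr 1
  linear_combination deriv expNegInvGlue x * expNegInvGlue_eq_sq_mul_deriv (1 - x) +
    deriv expNegInvGlue (1 - x) * expNegInvGlue_eq_sq_mul_deriv x

theorem contDiff_sqrt_deriv_smoothTransition {n : ℕ∞} :
    ContDiff ℝ n fun x => √(deriv smoothTransition x) := by
  have hden (x : ℝ) := smoothTransition.pos_denom x
  have hfactor (x : ℝ) : x ^ 2 + (1 - x) ^ 2 ≠ 0 := by nlinarith [sq_nonneg (2 * x - 1)]
  have hsqrt (x : ℝ) : √(deriv smoothTransition x) =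
      √(deriv expNegInvGlue x) * √(deriv expNegInvGlue (1 - x)) * √(x ^ 2 + (1 - x) ^ 2) /
        (expNegInvGlue x + expNegInvGlue (1 - x)) := by
    rw [deriv_smoothTransition, sqrt_div' _ (sq_nonneg _), sqrt_sq (hden x).le,
      sqrt_mul' _ (by positivity), sqrt_mul (deriv_expNegInvGlue_nonneg x)]
  simp only [hsqrt]
  have hrefl : ContDiff ℝ n fun x => √(deriv expNegInvGlue (1 - x)) :=
    contDiff_sqrt_deriv_expNegInvGlue.comp (contDiff_const.sub contDiff_id)
  exact ((contDiff_sqrt_deriv_expNegInvGlue.mul hrefl).mul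
    (ContDiff.sqrt (by fun_prop) hfactor)).div (by fun_prop) fun x => (hden x).ne'

/-- The cutoff which decreases from `1` on `(-∞, a]` to `0` on `[b, ∞)`, obtained from
`Real.smoothTransition` by the affine map sending `a` to `1` and `b` to `0`. Only meaningful for
`a < b`. -/
noncomputable def monotoneCutoff (a b x : ℝ) : ℝ :=
  smoothTransition ((b - x) / (b - a))

section monotoneCutoff

variable {a b : ℝ}

theorem contDiff_monotoneCutoff {n : ℕ∞} : ContDiff ℝ n (monotoneCutoff a b) := by
  unfold monotoneCutoff
  fun_prop

theorem monotoneCutoff_nonneg (x : ℝ) : 0 ≤ monotoneCutoff a b x :=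
  smoothTransition.nonneg _

theorem monotoneCutoff_le_one (x : ℝ) : monotoneCutoff a b x ≤ 1 :=
  smoothTransition.le_one _

theorem monotoneCutoff_of_le {x : ℝ} (hab : a < b) (hx : x ≤ a) : monotoneCutoff a b x = 1 :=
  smoothTransition.one_of_one_le <| (one_le_div (sub_pos.2 hab)).2 <| sub_le_sub_left hx b

theorem monotoneCutoff_of_ge {x : ℝ} (hab : a < b) (hx : b ≤ x) : monotoneCutoff a b x = 0 :=
  smoothTransition.zero_of_nonpos <|
    div_nonpos_of_nonpos_of_nonneg (sub_nonpos.2 hx) (sub_pos.2 hab).le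

theorem antitone_monotoneCutoff (hab : a < b) : Antitone (monotoneCutoff a b) := fun _ _ hxy =>
  smoothTransition.monotone <|
    div_le_div_of_nonneg_right (sub_le_sub_left hxy b) (sub_pos.2 hab).le

theorem contDiff_sqrt_monotoneCutoff {n : ℕ∞} :
    ContDiff ℝ n fun x => √(monotoneCutoff a b x) :=
  contDiff_sqrt_smoothTransition.comp ((contDiff_const.sub contDiff_id).div_const (b - a))

theorem deriv_monotoneCutoff (x : ℝ) :
    deriv (monotoneCutoff a b) x = -(deriv smoothTransition ((b - x) / (b - a)) / (b - a)) := by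
  have haff : HasDerivAt (fun y : ℝ => (b - y) / (b - a)) (-1 / (b - a)) x :=
    ((hasDerivAt_id x).const_sub b).div_const (b - a)
  have hs : HasDerivAt smoothTransition (deriv smoothTransition ((b - x) / (b - a)))
      ((b - x) / (b - a)) :=
    ((smoothTransition.contDiff (n := 1)).differentiable one_ne_zero _).hasDerivAt
  rw [show deriv (monotoneCutoff a b) x = _ from (hs.comp x haff).deriv]
  ring

theorem contDiff_sqrt_neg_deriv_monotoneCutoff {n : ℕ∞} :
    ContDiff ℝ n fun x => √(-deriv (monotoneCutoff a b) x) := by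
  simp only [deriv_monotoneCutoff, neg_neg, sqrt_div smoothTransition.monotone.deriv_nonneg]
  exact (contDiff_sqrt_deriv_smoothTransition.comp
    ((contDiff_const.sub contDiff_id).div_const (b - a))).div_const _

end monotoneCutoff

theorem monotone_cutoff_smooth_sqrt_general (a b : ℝ) (hab : a < b) :
    ∃ χ β : ℝ → ℝ,
      ContDiff ℝ (⊤ : ℕ∞) χ ∧ ContDiff ℝ (⊤ : ℕ∞) β ∧
      (∀ x : ℝ, 0 ≤ χ x ∧ χ x ≤ 1) ∧
      (∀ x : ℝ, x ≤ a → χ x = 1) ∧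
      (∀ x : ℝ, b ≤ x → χ x = 0) ∧
      (∀ x : ℝ, deriv χ x ≤ 0) ∧
      (∀ x : ℝ, 0 ≤ β x) ∧
      (∀ x : ℝ, β x ^ 2 = -(χ x * deriv χ x)) := by
  have hderiv (x : ℝ) : deriv (monotoneCutoff a b) x ≤ 0 :=
    (antitone_monotoneCutoff hab).deriv_nonpos
  refine ⟨monotoneCutoff a b, fun x => √(monotoneCutoff a b x) * √(-deriv (monotoneCutoff a b) x),
    contDiff_monotoneCutoff,
    contDiff_sqrt_monotoneCutoff.mul contDiff_sqrt_neg_deriv_monotoneCutoff,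
    fun x => ⟨monotoneCutoff_nonneg x, monotoneCutoff_le_one x⟩,
    fun _ => monotoneCutoff_of_le hab, fun _ => monotoneCutoff_of_ge hab, hderiv,
    fun _ => by positivity, fun x => ?_⟩
  rw [mul_pow, sq_sqrt (monotoneCutoff_nonneg x), sq_sqrt (neg_nonneg.2 (hderiv x)), mul_neg]

/-- Existence of monotone cutoffs with a smooth square root of `−χχ'`: for
`0 ≤ a < b` there are smooth `χ, β` with `0 ≤ χ ≤ 1`, `χ = 1` on `(−∞, a]`,
`χ = 0` on `[b, ∞)`, `χ' ≤ 0`, `β ≥ 0`, and `β² = −χ·χ'`. -/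
theorem monotone_cutoff_smooth_sqrt (a b : ℝ) (ha : 0 ≤ a) (hab : a < b) :
    ∃ χ β : ℝ → ℝ,
      ContDiff ℝ (⊤ : ℕ∞) χ ∧ ContDiff ℝ (⊤ : ℕ∞) β ∧
      (∀ x : ℝ, 0 ≤ χ x ∧ χ x ≤ 1) ∧
      (∀ x : ℝ, x ≤ a → χ x = 1) ∧
      (∀ x : ℝ, b ≤ x → χ x = 0) ∧
      (∀ x : ℝ, deriv χ x ≤ 0) ∧
      (∀ x : ℝ, 0 ≤ β x) ∧
      (∀ x : ℝ, β x ^ 2 = -(χ x * deriv χ x)) :=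
  monotone_cutoff_smooth_sqrt_general a b hab
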